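/- Let q ∈ (0,1] and let (σ_T)_{T≥1} be positive reals with σ_T² ≥ c·T for some c > 0 and all sufficiently large T. For x ∈ {0,1} let M_{1:T}(x) be the product of T independent copies of the law of x·B + η, where B ∼ Bernoulli(q) and η ∼ N(0, σ_T²) are independent, and let M'_{1:T}(x) be the product of T independent copies of N(q·x, σ_T²). Then sup_{x∈{0,1}} TV(M_{1:T}(x), M'_{1:T}(x)) → 0 as T → ∞. Equivalently, TV((q·N(1,σ_T²) + (1−q)·N(0,σ_T²))^{⊗T}, N(q,σ_T²)^{⊗T}) → 0 as T → ∞. -/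

import Mathlib

/-!
The proof is the `χ²` method. Writing `ν = N(q, v)`, the mixture has density
`f = q·L₁ + (1 - q)·L₀` with respect to `ν`, where `L_m` is the likelihood ratio of `N(m, v)`
against `ν`. Densities of product measures multiply (`pi_withDensity_ofReal`), so the second moment
of the density of the `T`-fold product is `(∫ f² dν)^T`, and Cauchy–Schwarz bounds the total
variation distance by `√((∫ f² dν)^T - 1)` (`tvDist_pi_le`).

The Gaussian moment generating function gives `∫ L_m L_m' dν = exp ((m - q)(m' - q) / v)`. Since the
mixture and `ν` have the same mean, the terms of order `1/v` in `∫ f² dν` cancel, leaving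
`∫ f² dν ≤ 1 + 1/v²` for `v ≥ 1` (`second_moment_le`). With `v = σ_T² ≥ c T` this yields
`(∫ f² dν)^T ≤ exp (T / v²) ≤ exp (1 / (c² T)) → 1`.
-/

open MeasureTheory ProbabilityTheory Real Filter Topology

/-- Total variation distance between two measures:
`TV(P,Q) = sup_A |P(A) − Q(A)|` over measurable sets `A`. -/
noncomputable def tvDist {α : Type*} [MeasurableSpace α] (P Q : Measure α) : ℝ :=
  ⨆ A : {s : Set α // MeasurableSet s}, |(P A.1).toReal - (Q A.1).toReal|

/-- The mixture measure `q·N(1,σ²) + (1−q)·N(0,σ²)`. -/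
noncomputable def mixGauss (σ q : ℝ) : Measure ℝ :=
  ENNReal.ofReal q • gaussianReal 1 (σ ^ 2).toNNReal
    + ENNReal.ofReal (1 - q) • gaussianReal 0 (σ ^ 2).toNNReal

/-- Cauchy–Schwarz bound of total variation by the `χ²` divergence `∫ f² dμ - 1`. -/
lemma tvDist_withDensity_le {α : Type*} [MeasurableSpace α] (μ : Measure α)
    [IsProbabilityMeasure μ] (f : α → ℝ) (hf : Measurable f) (hf0 : ∀ x, 0 ≤ f x)
    (hf2 : Integrable (fun x => f x ^ 2) μ) (h1 : ∫ x, f x ∂μ = 1) :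
    tvDist (μ.withDensity fun x => ENNReal.ofReal (f x)) μ ≤ √((∫ x, f x ^ 2 ∂μ) - 1) := by
  have hL2 : MemLp f 2 μ := (memLp_two_iff_integrable_sq hf.aestronglyMeasurable).2 hf2
  have hfi : Integrable f μ := hL2.integrable (by norm_num)
  have hg2 : MemLp (fun x => f x - 1) 2 μ := hL2.sub (memLp_const 1)
  have hgi : Integrable (fun x => f x - 1) μ := hg2.integrable (by norm_num)
  have hsq : ∫ x, (f x - 1) ^ 2 ∂μ = (∫ x, f x ^ 2 ∂μ) - 1 := by
    have : (fun x => (f x - 1) ^ 2) = fun x => f x ^ 2 - 2 * f x + 1 := by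
      ext x; ring
    have hi : Integrable (fun x => f x ^ 2 - 2 * f x) μ := hf2.sub (hfi.const_mul 2)
    rw [this, integral_add hi (integrable_const _),
      integral_sub hf2 (hfi.const_mul 2), integral_const_mul, h1]
    simp; ring
  -- Cauchy–Schwarz in the form of nonnegativity of the variance of `|f - 1|`
  have hCS : (∫ x, |f x - 1| ∂μ) ^ 2 ≤ (∫ x, f x ^ 2 ∂μ) - 1 := by
    have hv := variance_nonneg (fun x => |f x - 1|) μ
    rw [variance_eq_sub (X := fun x => |f x - 1|) hg2.abs] at hv
    simp only [Pi.pow_apply, sq_abs, hsq] at hv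
    linarith
  have hmain : ∫ x, |f x - 1| ∂μ ≤ √((∫ x, f x ^ 2 ∂μ) - 1) := Real.le_sqrt_of_sq_le hCS
  refine le_trans ?_ hmain
  have : Nonempty {s : Set α // MeasurableSet s} := ⟨⟨∅, MeasurableSet.empty⟩⟩
  refine ciSup_le ?_
  rintro ⟨A, hA⟩
  have hP : ((μ.withDensity fun x => ENNReal.ofReal (f x)) A).toReal = ∫ x in A, f x ∂μ := by
    rw [withDensity_apply _ hA, integral_eq_lintegral_of_nonneg_ae
      (Eventually.of_forall hf0) hf.aestronglyMeasurable]
  have hQ : (μ A).toReal = ∫ x in A, (1 : ℝ) ∂μ := by simp [measureReal_def]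
  simp only [hP, hQ]
  rw [← integral_sub hfi.integrableOn (integrable_const _).integrableOn]
  exact (abs_integral_le_integral_abs).trans
    (setIntegral_le_integral hgi.abs (Eventually.of_forall fun x => abs_nonneg _))

lemma pi_withDensity_ofReal {α : Type*} [MeasurableSpace α] (μ : Measure α)
    [IsProbabilityMeasure μ] (f : α → ℝ) (hf0 : ∀ x, 0 ≤ f x)
    (hfi : Integrable f μ) (T : ℕ) :
    Measure.pi (fun _ : Fin T => μ.withDensity fun x => ENNReal.ofReal (f x))
      = (Measure.pi fun _ : Fin T => μ).withDensity
          fun x => ENNReal.ofReal (∏ i, f (x i)) := by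
  have := isFiniteMeasure_withDensity_ofReal hfi.2
  refine Measure.pi_eq fun s hs => ?_
  rw [withDensity_apply _ (MeasurableSet.univ_pi hs), Measure.restrict_pi_pi,
    ← ofReal_integral_eq_lintegral_ofReal
      (Integrable.fintype_prod (f := fun _ => f) fun i => hfi.integrableOn)
      (Eventually.of_forall fun x => Finset.prod_nonneg fun i _ => hf0 _),
    integral_fintype_prod_eq_prod (fun _ => f),
    ENNReal.ofReal_prod_of_nonneg fun i _ => integral_nonneg hf0]
  refine Finset.prod_congr rfl fun i _ => ?_
  rw [withDensity_apply _ (hs i), ofReal_integral_eq_lintegral_ofReal hfi.integrableOn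
    (Eventually.of_forall hf0)]

lemma tvDist_pi_le {α : Type*} [MeasurableSpace α] (μ : Measure α)
    [IsProbabilityMeasure μ] (f : α → ℝ) (hf : Measurable f) (hf0 : ∀ x, 0 ≤ f x)
    (hf2 : Integrable (fun x => f x ^ 2) μ) (h1 : ∫ x, f x ∂μ = 1) (T : ℕ) :
    tvDist (Measure.pi fun _ : Fin T => μ.withDensity fun x => ENNReal.ofReal (f x))
      (Measure.pi fun _ : Fin T => μ) ≤ √((∫ x, f x ^ 2 ∂μ) ^ T - 1) := by
  have hL2 : MemLp f 2 μ := (memLp_two_iff_integrable_sq hf.aestronglyMeasurable).2 hf2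
  rw [pi_withDensity_ofReal μ f hf0 (hL2.integrable (by norm_num))]
  have h := tvDist_withDensity_le (Measure.pi fun _ : Fin T => μ) (fun x => ∏ i, f (x i))
    (by fun_prop) (fun x => Finset.prod_nonneg fun i _ => hf0 _)
    (by
      simp only [← Finset.prod_pow]
      exact Integrable.fintype_prod (f := fun _ x => f x ^ 2) fun _ => hf2)
    (by rw [integral_fintype_prod_eq_pow f, h1, one_pow])
  simp only [← Finset.prod_pow] at h
  rwa [integral_fintype_prod_eq_pow (fun x => f x ^ 2), Fintype.card_fin] at h

/-- The likelihood ratio of `N(m, v)` against `N(q, v)`. -/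
noncomputable def gaussLR (q v m x : ℝ) : ℝ :=
  rexp ((m - q) * (x - q) / v - (m - q) ^ 2 / (2 * v))

lemma gaussLR_measurable (q v m : ℝ) : Measurable (gaussLR q v m) := by
  unfold gaussLR; fun_prop

lemma gaussLR_nonneg (q v m x : ℝ) : 0 ≤ gaussLR q v m x := (Real.exp_pos _).le

lemma gaussianReal_eq_withDensity (q m : ℝ) {v : NNReal} (hv : v ≠ 0) :
    gaussianReal m v
      = (gaussianReal q v).withDensity fun x => ENNReal.ofReal (gaussLR q v m x) := by
  have hv' : (v : ℝ) ≠ 0 := by exact_mod_cast hv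
  rw [gaussianReal_of_var_ne_zero _ hv, gaussianReal_of_var_ne_zero _ hv,
    ← withDensity_mul _ (measurable_gaussianPDF _ _) (gaussLR_measurable _ _ _).ennreal_ofReal]
  congr 1
  ext x
  simp only [Pi.mul_apply, gaussianPDF]
  rw [← ENNReal.ofReal_mul (gaussianPDFReal_nonneg _ _ _)]
  congr 1
  rw [gaussianPDFReal, gaussianPDFReal, gaussLR, mul_assoc (√(2 * π * v))⁻¹, ← Real.exp_add]
  congr 2
  field_simp
  ring

lemma gaussLR_mul (q m m' x : ℝ) {v : ℝ} (hv : v ≠ 0) :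
    gaussLR q v m x * gaussLR q v m' x
      = rexp (((m - q) + (m' - q)) / v * x)
        * rexp (-(((m - q) + (m' - q)) * q / v) - ((m - q) ^ 2 + (m' - q) ^ 2) / (2 * v)) := by
  rw [gaussLR, gaussLR, ← Real.exp_add, ← Real.exp_add]
  congr 1
  field_simp
  ring

lemma gaussLR_mul_integrable (q m m' : ℝ) {v : NNReal} (hv : v ≠ 0) :
    Integrable (fun x => gaussLR q v m x * gaussLR q v m' x) (gaussianReal q v) := by
  simp only [gaussLR_mul q m m' _ (NNReal.coe_ne_zero.2 hv)]
  exact (integrable_exp_mul_gaussianReal _).mul_const _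

lemma integral_gaussLR_mul (q m m' : ℝ) {v : NNReal} (hv : v ≠ 0) :
    ∫ x, gaussLR q v m x * gaussLR q v m' x ∂(gaussianReal q v)
      = rexp ((m - q) * (m' - q) / v) := by
  have hv' : (v : ℝ) ≠ 0 := by exact_mod_cast hv
  simp only [gaussLR_mul q m m' _ hv']
  rw [integral_mul_const]
  have h := congrFun (mgf_id_gaussianReal (μ := q) (v := v)) (((m - q) + (m' - q)) / v)
  simp only [mgf, id] at h
  rw [h, ← Real.exp_add]
  congr 1
  field_simp
  ring

/-- The density of the mixture `q·N(1, v) + (1 - q)·N(0, v)` with respect to `N(q, v)`. -/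
noncomputable def mixDensity (q v x : ℝ) : ℝ :=
  q * gaussLR q v 1 x + (1 - q) * gaussLR q v 0 x

lemma mixGauss_eq_withDensity (q σ : ℝ) (h0 : 0 ≤ q) (h1 : q ≤ 1) (hv : (σ ^ 2).toNNReal ≠ 0) :
    mixGauss σ q = (gaussianReal q (σ ^ 2).toNNReal).withDensity
      fun x => ENNReal.ofReal (mixDensity q (σ ^ 2).toNNReal x) := by
  have hm (m : ℝ) := (gaussLR_measurable q (σ ^ 2).toNNReal m).ennreal_ofReal
  rw [mixGauss, gaussianReal_eq_withDensity q 1 hv, gaussianReal_eq_withDensity q 0 hv,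
    ← withDensity_smul _ (hm 1), ← withDensity_smul _ (hm 0),
    ← withDensity_add_left ((hm 1).const_smul _)]
  congr 1
  ext x
  simp only [Pi.add_apply, Pi.smul_apply, smul_eq_mul, mixDensity]
  rw [ENNReal.ofReal_add (mul_nonneg h0 (gaussLR_nonneg _ _ _ _))
    (mul_nonneg (sub_nonneg.2 h1) (gaussLR_nonneg _ _ _ _)), ENNReal.ofReal_mul h0,
    ENNReal.ofReal_mul (sub_nonneg.2 h1)]

lemma mixDensity_sq (q v x : ℝ) : mixDensity q v x ^ 2
    = q ^ 2 * (gaussLR q v 1 x * gaussLR q v 1 x)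
      + 2 * q * (1 - q) * (gaussLR q v 1 x * gaussLR q v 0 x)
      + (1 - q) ^ 2 * (gaussLR q v 0 x * gaussLR q v 0 x) := by
  rw [mixDensity]; ring

lemma mixDensity_sq_integrable (q : ℝ) {v : NNReal} (hv : v ≠ 0) :
    Integrable (fun x => mixDensity q v x ^ 2) (gaussianReal q v) := by
  simp only [mixDensity_sq]
  exact (((gaussLR_mul_integrable q 1 1 hv).const_mul _).add
    ((gaussLR_mul_integrable q 1 0 hv).const_mul _)).add
    ((gaussLR_mul_integrable q 0 0 hv).const_mul _)

lemma integral_mixDensity_sq (q : ℝ) {v : NNReal} (hv : v ≠ 0) :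
    ∫ x, mixDensity q v x ^ 2 ∂(gaussianReal q v)
      = q ^ 2 * rexp ((1 - q) * (1 - q) / v) + 2 * q * (1 - q) * rexp ((1 - q) * (0 - q) / v)
        + (1 - q) ^ 2 * rexp ((0 - q) * (0 - q) / v) := by
  have h11 := (gaussLR_mul_integrable q 1 1 hv).const_mul (q ^ 2)
  have h10 := (gaussLR_mul_integrable q 1 0 hv).const_mul (2 * q * (1 - q))
  have h00 := (gaussLR_mul_integrable q 0 0 hv).const_mul ((1 - q) ^ 2)
  have h1 : Integrable (fun x => q ^ 2 * (gaussLR q v 1 x * gaussLR q v 1 x)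
      + 2 * q * (1 - q) * (gaussLR q v 1 x * gaussLR q v 0 x)) (gaussianReal q v) := h11.add h10
  simp only [mixDensity_sq]
  rw [integral_add h1 h00, integral_add h11 h10]
  simp only [integral_const_mul, integral_gaussLR_mul _ _ _ hv]

lemma integral_mixDensity (q : ℝ) {v : NNReal} (hv : v ≠ 0) :
    ∫ x, mixDensity q v x ∂(gaussianReal q v) = 1 := by
  -- the likelihood ratio of `N(q, v)` against itself is the constant `1`
  have hq (x : ℝ) : gaussLR q v q x = 1 := by simp [gaussLR]
  have hi (m : ℝ) := gaussLR_mul_integrable q m q hv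
  have he (m : ℝ) := integral_gaussLR_mul q m q hv
  simp only [hq, mul_one, sub_self, mul_zero, zero_div, Real.exp_zero] at hi he
  simp only [mixDensity]
  rw [integral_add ((hi 1).const_mul _) ((hi 0).const_mul _)]
  simp only [integral_const_mul, he]
  ring

/-- The bound `exp t ≤ 1 + t + t²` for `|t| ≤ 1`, applied to each exponential; the contributions
linear in `1/v` sum to `q²(1 - q)² - 2q²(1 - q)² + q²(1 - q)² = 0`. -/
lemma second_moment_le (q : ℝ) (h0 : 0 ≤ q) (h1 : q ≤ 1) {v : NNReal} (hv : 1 ≤ v) :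
    ∫ x, mixDensity q v x ^ 2 ∂(gaussianReal q v) ≤ 1 + (1 / (v : ℝ)) ^ 2 := by
  rw [integral_mixDensity_sq q (by positivity)]
  have hv1 : (1 : ℝ) ≤ v := by exact_mod_cast hv
  rw [div_eq_mul_one_div ((1 - q) * (1 - q)), div_eq_mul_one_div ((1 - q) * (0 - q)),
    div_eq_mul_one_div ((0 - q) * (0 - q))]
  have hu0 : 0 ≤ 1 / (v : ℝ) := by positivity
  have hu1 : 1 / (v : ℝ) ≤ 1 := by rw [div_le_one (by linarith)]; exact hv1
  generalize 1 / (v : ℝ) = u at *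
  have hexp (t : ℝ) (ht : |t| ≤ 1) : rexp t ≤ 1 + t + t ^ 2 := by
    have h := Real.abs_exp_sub_one_sub_id_le ht
    have := (abs_le.1 h).2
    linarith
  have hp0 : 0 ≤ 1 - q := by linarith
  have hp1 : 1 - q ≤ 1 := by linarith
  have hb (a b : ℝ) (ha : |a| ≤ 1) (hb : |b| ≤ 1) : |a * b * u| ≤ 1 := by
    rw [abs_mul, abs_mul, abs_of_nonneg hu0]
    exact mul_le_one₀ (mul_le_one₀ ha (abs_nonneg _) hb) hu0 hu1
  have hA : |1 - q| ≤ 1 := by rw [abs_of_nonneg hp0]; exact hp1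
  have hB : |0 - q| ≤ 1 := by rw [zero_sub, abs_neg, abs_of_nonneg h0]; exact h1
  have e1 := mul_le_mul_of_nonneg_left (hexp _ (hb _ _ hA hA)) (sq_nonneg q)
  have e2 := mul_le_mul_of_nonneg_left (hexp _ (hb _ _ hA hB))
    (by positivity : 0 ≤ 2 * q * (1 - q))
  have e3 := mul_le_mul_of_nonneg_left (hexp _ (hb _ _ hB hB)) (sq_nonneg (1 - q))
  have hqq : (q * (1 - q)) ^ 2 ≤ 1 :=
    pow_le_one₀ (mul_nonneg h0 hp0) (mul_le_one₀ h1 hp0 hp1)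
  have e4 : (q * (1 - q)) ^ 2 * u ^ 2 ≤ u ^ 2 := mul_le_of_le_one_left (sq_nonneg u) hqq
  linear_combination e1 + e2 + e3 + e4

/-- If `σ_T² ≥ c·T` eventually (for some `c > 0`), then the total variation distance between
the `T`-fold product of the subsampled Gaussian mechanism's output distribution
`q·N(1,σ_T²) + (1−q)·N(0,σ_T²)` and the `T`-fold product of `N(q,σ_T²)` tends to `0`
as `T → ∞`. -/
theorem tv_prod_mixture_gaussian_tendsto_zero
    (q : ℝ) (hq : q ∈ Set.Ioc (0 : ℝ) 1) (σ : ℕ → ℝ) (hσ : ∀ T, 1 ≤ T → 0 < σ T)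
    (c : ℝ) (hc : 0 < c) (hgrowth : ∀ᶠ T : ℕ in atTop, c * T ≤ (σ T) ^ 2) :
    Tendsto
      (fun T : ℕ =>
        tvDist (Measure.pi fun _ : Fin T => mixGauss (σ T) q)
          (Measure.pi fun _ : Fin T => gaussianReal q ((σ T) ^ 2).toNNReal))
      atTop (𝓝 0) := by
  have hv_large : ∀ᶠ T : ℕ in atTop, 1 ≤ c * (T : ℝ) :=
    (tendsto_natCast_atTop_atTop.const_mul_atTop hc).eventually_ge_atTop 1
  have hlim : Tendsto (fun T : ℕ => √(rexp (1 / (c ^ 2 * (T : ℝ))) - 1)) atTop (𝓝 0) := by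
    have h1 : Tendsto (fun T : ℕ => 1 / (c ^ 2 * (T : ℝ))) atTop (𝓝 0) :=
      tendsto_const_nhds.div_atTop
        (tendsto_natCast_atTop_atTop.const_mul_atTop (by positivity))
    have h2 := ((Real.continuous_exp.tendsto 0).comp h1).sub_const 1
    have h3 := (Real.continuous_sqrt.tendsto _).comp h2
    simpa [Function.comp_def] using h3
  refine squeeze_zero' (Eventually.of_forall fun T => Real.iSup_nonneg fun A => abs_nonneg _)
    ?_ hlim
  filter_upwards [hv_large, hgrowth] with T hT hg
  have hv1 : 1 ≤ (σ T ^ 2).toNNReal := Real.one_le_toNNReal.2 (hT.trans hg)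
  have hv0 : (σ T ^ 2).toNNReal ≠ 0 := by positivity
  rw [mixGauss_eq_withDensity q (σ T) hq.1.le hq.2 hv0]
  refine (tvDist_pi_le _ _ ?_ ?_ (mixDensity_sq_integrable q hv0)
    (integral_mixDensity q hv0) T).trans ?_
  · exact ((gaussLR_measurable _ _ _).const_mul _).add ((gaussLR_measurable _ _ _).const_mul _)
  · intro x
    exact add_nonneg (mul_nonneg hq.1.le (gaussLR_nonneg _ _ _ _))
      (mul_nonneg (sub_nonneg.2 hq.2) (gaussLR_nonneg _ _ _ _))
  · refine Real.sqrt_le_sqrt (sub_le_sub_right ?_ 1)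
    have hm := second_moment_le q hq.1.le hq.2 hv1
    rw [Real.coe_toNNReal _ (sq_nonneg _)] at hm ⊢
    have hTpos : 0 < (T : ℝ) := by
      by_contra h
      nlinarith
    have hinv : 1 / σ T ^ 2 ≤ 1 / (c * T) := one_div_le_one_div_of_le (by positivity) hg
    calc (∫ x, mixDensity q (σ T ^ 2) x ^ 2 ∂(gaussianReal q (σ T ^ 2).toNNReal)) ^ T
        ≤ rexp ((1 / (c * T)) ^ 2) ^ T := by
          refine pow_le_pow_left₀ (integral_nonneg fun x => sq_nonneg _) ?_ T
          refine hm.trans ((add_comm _ _).trans_le ((Real.add_one_le_exp _).trans ?_))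
          exact Real.exp_le_exp.2 (pow_le_pow_left₀ (by positivity) hinv 2)
      _ = rexp (1 / (c ^ 2 * T)) := by
          rw [← Real.exp_nat_mul]
          congr 1
          field_simp
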